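/- Let n ≥ 2 be an integer, let ω = e^{2πi/n}, and for t ∈ ℝ let Rot(t) denote the 2×2 real rotation matrix [[cos t, −sin t],[sin t, cos t]], viewed as a complex matrix. Then (1/n)·Σ_{a=0}^{n−1} Σ_{b=0}^{n−1} ω^{−ab}·(Rot(2πa/n) ⊗ Rot(2πb/n)), where ⊗ is the Kronecker product, equals the 4×4 matrix [[c, 0, 0, −i·s], [0, c, i·s, 0], [0, i·s, c, 0], [−i·s, 0, 0, c]], where c = cos(2π/n) and s = sin(2π/n). -/

import Mathlib

/-!
With `ω = exp (2πi/n)`, orthogonality of the characters of `ℤ/n` gives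
`n⁻¹ ∑ a, ∑ b, ω ^ (-ab) ω ^ (pa) ω ^ (qb) = ω ^ (pq)`: the structure `R` acts by `ω ^ (pq)` on the
tensor product of vectors of weights `p` and `q`. The rotation by `t` is `cos t • 1 + sin t • J`,
where `J` is the quarter turn, so it has the two weights `±1`, with spectral projections
`(1 ∓ iJ) / 2`. Recombining the four products of projections with the factors `ω ^ (±1)` gives
`cos (2π/n) • 1 ⊗ 1 - i sin (2π/n) • J ⊗ J`.
-/

open Matrix Complex
open scoped Kronecker

/-- The 2×2 rotation matrix, viewed as a complex matrix. -/
noncomputable def Rot (t : ℝ) : Matrix (Fin 2) (Fin 2) ℂ :=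
  !![(Real.cos t : ℂ), -(Real.sin t : ℂ); (Real.sin t : ℂ), (Real.cos t : ℂ)]

lemma sum_range_ite_dvd_sub {A : Type*} [AddCommMonoid A] {n : ℕ} [NeZero n] {f : ℤ → A}
    (hf : Function.Periodic f n) (q : ℤ) :
    ∑ a ∈ Finset.range n, (if (n : ℤ) ∣ q - a then f a else 0) = f q := by
  have hn : (0 : ℤ) < n := by exact_mod_cast NeZero.pos n
  obtain ⟨r, hr⟩ := Int.eq_ofNat_of_zero_le (Int.emod_nonneg q hn.ne')
  have hr_lt : r < n := by exact_mod_cast hr ▸ Int.emod_lt_of_pos q hn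
  have dvd_iff : ∀ a ∈ Finset.range n, (n : ℤ) ∣ q - a ↔ a = r := by
    intro a ha
    rw [← Int.modEq_iff_dvd, Int.ModEq, hr,
      Int.emod_eq_of_lt (Int.natCast_nonneg a) (by exact_mod_cast Finset.mem_range.1 ha),
      Nat.cast_inj]
  calc ∑ a ∈ Finset.range n, (if (n : ℤ) ∣ q - a then f a else 0)
      = ∑ a ∈ Finset.range n, if a = r then f a else 0 :=
        Finset.sum_congr rfl fun a ha => if_congr (dvd_iff a ha) rfl rfl
    _ = f r := by rw [Finset.sum_ite_eq', if_pos (Finset.mem_range.2 hr_lt)]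
    _ = f q := by
      rw [← hr, Int.emod_def, mul_comm]
      exact hf.sub_zsmul_eq (q / n)

section PrimitiveRoot

variable {K : Type*} [Field K] {n : ℕ} {ω : K}

lemma sum_range_zpow_mul (hω : IsPrimitiveRoot ω n) (k : ℤ) :
    ∑ b ∈ Finset.range n, ω ^ (k * (b : ℤ)) = if (n : ℤ) ∣ k then (n : K) else 0 := by
  simp only [_root_.zpow_mul, zpow_natCast]
  split_ifs with hk
  · simp [(hω.zpow_eq_one_iff_dvd k).2 hk]
  · have hωk : ω ^ k ≠ 1 := mt (hω.zpow_eq_one_iff_dvd k).1 hk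
    have hωkn : (ω ^ k) ^ n = 1 := by
      rw [← zpow_natCast, zpow_comm, zpow_natCast, hω.pow_eq_one, _root_.one_zpow]
    rw [geom_sum_eq hωk, hωkn, sub_self, zero_div]

lemma sum_range_sum_range_zpow_neg_mul [NeZero n] (hω : IsPrimitiveRoot ω n) (p q : ℤ) :
    ∑ a ∈ Finset.range n, ∑ b ∈ Finset.range n,
      ω ^ (-((a : ℤ) * b)) * (ω ^ (p * (a : ℤ)) * ω ^ (q * (b : ℤ))) = n * ω ^ (p * q) := by
  have hω0 : ω ≠ 0 := hω.ne_zero (NeZero.ne n)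
  have inner_sum (a : ℕ) : ∑ b ∈ Finset.range n,
      ω ^ (-((a : ℤ) * b)) * (ω ^ (p * (a : ℤ)) * ω ^ (q * (b : ℤ))) =
        if (n : ℤ) ∣ q - a then n * ω ^ (p * (a : ℤ)) else 0 := by
    rw [← ite_zero_mul, ← sum_range_zpow_mul hω, Finset.sum_mul]
    refine Finset.sum_congr rfl fun b _ => ?_
    simp only [← zpow_add₀ hω0]
    congr 1
    ring
  have periodic : Function.Periodic (fun a : ℤ => (n : K) * ω ^ (p * a)) n := fun a => by
    simp only [mul_add, zpow_add₀ hω0, (hω.zpow_eq_one_iff_dvd _).2 (dvd_mul_left (n : ℤ) p),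
      mul_one]
  simp only [inner_sum]
  exact sum_range_ite_dvd_sub periodic q

lemma inv_smul_sum_zpow_smul_bilin {M N L : Type*} [AddCommGroup M] [Module K M]
    [AddCommGroup N] [Module K N] [AddCommGroup L] [Module K L] [NeZero n]
    (hω : IsPrimitiveRoot ω n) (B : M →ₗ[K] N →ₗ[K] L) (s t : Finset ℤ) (x : ℤ → M) (y : ℤ → N) :
    (n : K)⁻¹ • ∑ a ∈ Finset.range n, ∑ b ∈ Finset.range n, ω ^ (-((a : ℤ) * b)) •
        B (∑ p ∈ s, ω ^ (p * (a : ℤ)) • x p) (∑ q ∈ t, ω ^ (q * (b : ℤ)) • y q) =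
      ∑ p ∈ s, ∑ q ∈ t, ω ^ (p * q) • B (x p) (y q) := by
  have hn : (n : K) ≠ 0 := (hω.neZero').out
  rw [inv_smul_eq_iff₀ hn]
  calc ∑ a ∈ Finset.range n, ∑ b ∈ Finset.range n, ω ^ (-((a : ℤ) * b)) •
        B (∑ p ∈ s, ω ^ (p * (a : ℤ)) • x p) (∑ q ∈ t, ω ^ (q * (b : ℤ)) • y q)
      = ∑ a ∈ Finset.range n, ∑ b ∈ Finset.range n, ∑ p ∈ s, ∑ q ∈ t,
          (ω ^ (-((a : ℤ) * b)) * (ω ^ (p * (a : ℤ)) * ω ^ (q * (b : ℤ)))) • B (x p) (y q) := by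
        simp only [LinearMap.map_sum₂, LinearMap.map_smul₂]
        simp only [map_sum, map_smul, Finset.smul_sum, mul_smul]
    _ = ∑ p ∈ s, ∑ q ∈ t, (∑ a ∈ Finset.range n, ∑ b ∈ Finset.range n,
          ω ^ (-((a : ℤ) * b)) * (ω ^ (p * (a : ℤ)) * ω ^ (q * (b : ℤ)))) • B (x p) (y q) := by
        simp only [Finset.sum_smul, Finset.sum_comm (s := Finset.range n) (t := s),
          Finset.sum_comm (s := Finset.range n) (t := t)]
    _ = (n : K) • ∑ p ∈ s, ∑ q ∈ t, ω ^ (p * q) • B (x p) (y q) := by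
        simp only [sum_range_sum_range_zpow_neg_mul hω, mul_smul, Finset.smul_sum]

end PrimitiveRoot

section CircularMotion

variable {M N L : Type*} [AddCommGroup M] [Module ℂ M] [AddCommGroup N] [Module ℂ N]
  [AddCommGroup L] [Module ℂ L]

/-- The Fourier coefficient of `exp (k * z * I)` in `cos z • x + sin z • y`, for `k = ±1`; for other
`k` the value has no meaning. -/
noncomputable def circularCoeff (x y : M) (k : ℤ) : M := (1 / 2 : ℂ) • (x - (k * I : ℂ) • y)

lemma cos_smul_add_sin_smul_eq_sum_exp (z : ℂ) (x y : M) :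
    Complex.cos z • x + Complex.sin z • y =
      ∑ k ∈ ({1, -1} : Finset ℤ), exp (k * z * I) • circularCoeff x y k := by
  rw [Finset.sum_pair (by decide), Complex.cos, Complex.sin]
  simp only [circularCoeff]
  push_cast
  rw [neg_one_mul, neg_mul, one_mul]
  module

lemma bilin_circularCoeff (B : M →ₗ[ℂ] N →ₗ[ℂ] L) (x y : M) (x' y' : N) (p q : ℤ) :
    B (circularCoeff x y p) (circularCoeff x' y' q) =
      (1 / 4 : ℂ) •
        (B x x' - (q * I : ℂ) • B x y' - (p * I : ℂ) • B y x' - (p * q : ℂ) • B y y') := by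
  simp only [circularCoeff, map_sub, map_smul, LinearMap.sub_apply, LinearMap.smul_apply]
  linear_combination (norm := module) ((p * q / 4 : ℂ) • I_sq) • B y y'

lemma sum_exp_zpow_smul_circularCoeff (B : M →ₗ[ℂ] N →ₗ[ℂ] L) (z : ℂ) (x y : M) (x' y' : N) :
    ∑ p ∈ ({1, -1} : Finset ℤ), ∑ q ∈ ({1, -1} : Finset ℤ),
        exp (z * I) ^ (p * q) • B (circularCoeff x y p) (circularCoeff x' y' q) =
      Complex.cos z • B x x' - (I * Complex.sin z) • B y y' := by
  have exp_zpow_one : exp (z * I) ^ (1 : ℤ) = Complex.cos z + Complex.sin z * I := by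
    rw [zpow_one, exp_mul_I]
  have exp_zpow_neg_one : exp (z * I) ^ (-1 : ℤ) = Complex.cos z - Complex.sin z * I := by
    rw [_root_.zpow_neg_one, ← exp_neg, ← neg_mul, exp_mul_I, Complex.cos_neg,
      Complex.sin_neg, neg_mul, sub_eq_add_neg]
  simp only [Finset.sum_pair (show (1 : ℤ) ≠ -1 by decide), mul_neg, mul_one, neg_neg,
    exp_zpow_one, exp_zpow_neg_one, bilin_circularCoeff]
  push_cast
  module

lemma inv_smul_sum_cos_sin_bilin {n : ℕ} [NeZero n] (B : M →ₗ[ℂ] N →ₗ[ℂ] L)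
    (x y : M) (x' y' : N) :
    (n : ℂ)⁻¹ • ∑ a ∈ Finset.range n, ∑ b ∈ Finset.range n,
        exp (2 * Real.pi * I / n) ^ (-((a : ℤ) * b)) •
          B (Complex.cos (2 * Real.pi * a / n) • x + Complex.sin (2 * Real.pi * a / n) • y)
            (Complex.cos (2 * Real.pi * b / n) • x' + Complex.sin (2 * Real.pi * b / n) • y') =
      Complex.cos (2 * Real.pi / n) • B x x' - (I * Complex.sin (2 * Real.pi / n)) • B y y' := by
  have exp_eq_zpow (k : ℤ) (a : ℕ) :
      exp (k * (2 * Real.pi * a / n) * I) = exp (2 * Real.pi * I / n) ^ (k * (a : ℤ)) := by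
    rw [← exp_int_mul]
    push_cast
    ring_nf
  simp only [cos_smul_add_sin_smul_eq_sum_exp, exp_eq_zpow]
  rw [inv_smul_sum_zpow_smul_bilin (isPrimitiveRoot_exp n (NeZero.ne n)),
    ← sum_exp_zpow_smul_circularCoeff, div_mul_eq_mul_div]

end CircularMotion

/-- The rotation by a right angle, the matrix `J` with `Rot t = cos t • 1 + sin t • J`. -/
def quarterTurn : Matrix (Fin 2) (Fin 2) ℂ := !![0, -1; 1, 0]

lemma Rot_eq_cos_smul_one_add_sin_smul_quarterTurn (t : ℝ) :
    Rot t = Complex.cos t • 1 + Complex.sin t • quarterTurn := by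
  ext i j
  fin_cases i <;> fin_cases j <;> simp [Rot, quarterTurn]

lemma reindex_kronecker_fin_two {R : Type*} [Mul R] (A B : Matrix (Fin 2) (Fin 2) R) :
    reindex finProdFinEquiv finProdFinEquiv (A ⊗ₖ B) =
      !![A 0 0 * B 0 0, A 0 0 * B 0 1, A 0 1 * B 0 0, A 0 1 * B 0 1;
         A 0 0 * B 1 0, A 0 0 * B 1 1, A 0 1 * B 1 0, A 0 1 * B 1 1;
         A 1 0 * B 0 0, A 1 0 * B 0 1, A 1 1 * B 0 0, A 1 1 * B 0 1;
         A 1 0 * B 1 0, A 1 0 * B 1 1, A 1 1 * B 1 0, A 1 1 * B 1 1] := by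
  ext i j
  fin_cases i <;> fin_cases j <;> rfl

lemma smul_one_kronecker_sub_smul_quarterTurn_kronecker (c d : ℂ) :
    c • reindex finProdFinEquiv finProdFinEquiv
        ((1 : Matrix (Fin 2) (Fin 2) ℂ) ⊗ₖ (1 : Matrix (Fin 2) (Fin 2) ℂ)) -
      d • reindex finProdFinEquiv finProdFinEquiv (quarterTurn ⊗ₖ quarterTurn) =
    !![c, 0, 0, -d; 0, c, d, 0; 0, d, c, 0; -d, 0, 0, c] := by
  rw [reindex_kronecker_fin_two, reindex_kronecker_fin_two]
  ext i j
  fin_cases i <;> fin_cases j <;> simp [quarterTurn]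

/-- Lemma 1: the 4×4 representation of the quasitriangular structure of ℂCₙ. -/
theorem cyclic_R_matrix (n : ℕ) (hn : 2 ≤ n) :
    ((n : ℂ))⁻¹ • (∑ a ∈ Finset.range n, ∑ b ∈ Finset.range n,
      (Complex.exp (2 * Real.pi * Complex.I / n)) ^ (-((a : ℤ) * (b : ℤ))) •
        (Matrix.reindex finProdFinEquiv finProdFinEquiv
          (Rot (2 * Real.pi * a / n) ⊗ₖ Rot (2 * Real.pi * b / n)) : Matrix (Fin 4) (Fin 4) ℂ))
    = !![(Real.cos (2 * Real.pi / n) : ℂ), 0, 0, -Complex.I * (Real.sin (2 * Real.pi / n) : ℂ);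
         0, (Real.cos (2 * Real.pi / n) : ℂ), Complex.I * (Real.sin (2 * Real.pi / n) : ℂ), 0;
         0, Complex.I * (Real.sin (2 * Real.pi / n) : ℂ), (Real.cos (2 * Real.pi / n) : ℂ), 0;
         -Complex.I * (Real.sin (2 * Real.pi / n) : ℂ), 0, 0,
           (Real.cos (2 * Real.pi / n) : ℂ)] := by
  have : NeZero n := ⟨by omega⟩
  let kron : Matrix (Fin 2) (Fin 2) ℂ →ₗ[ℂ] Matrix (Fin 2) (Fin 2) ℂ →ₗ[ℂ]
      Matrix (Fin 4) (Fin 4) ℂ :=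
    kroneckerBilinear.compr₂
      (reindexLinearEquiv ℂ ℂ finProdFinEquiv finProdFinEquiv).toLinearMap
  have kron_apply (A A' : Matrix (Fin 2) (Fin 2) ℂ) :
      kron A A' = reindex finProdFinEquiv finProdFinEquiv (A ⊗ₖ A') := rfl
  simp only [Rot_eq_cos_smul_one_add_sin_smul_quarterTurn, ← kron_apply]
  push_cast
  rw [inv_smul_sum_cos_sin_bilin, kron_apply, kron_apply,
    smul_one_kronecker_sub_smul_quarterTurn_kronecker, neg_mul]
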